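/- arXiv:1503.07850 — 2 statements merged into one kernel-verified Lean document; each statement's English description precedes it below -/
import Mathlib

section
/- The function v : ℝ × ℝ → ℝ defined by v(x,t) = 3/2 − (3/2)·tanh(((3·√3 − 3)/4)·(x + ((5 − √3)/2)·t)) satisfies, for all real x and t, the equation ∂v/∂t(x,t) = ∂²v/∂x²(x,t) + 2·v(x,t)·∂v/∂x(x,t) + v(x,t)·(1 − v(x,t))·(v(x,t) − 3), and moreover v(x,0) = 3·exp(−(3·(√3−1)/4)·x)/(exp((3·(√3−1)/4)·x) + exp(−(3·(√3−1)/4)·x)) for all real x. -/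
/-!
With `T = tanh (k (x + c t))`, `k = (3√3 - 3)/4`, `c = (5 - √3)/2`, one has `T_x = k (1 - T²)` and
`T_t = c T_x`, so every term of the equation for `v = 3/2 (1 - T)` is `1 - T²` times a polynomial
of degree at most one in `T`. Comparing coefficients leaves `8 k² + 12 k - 9 = 0` and
`12 k c = 36 k - 9`, both of which follow from `√3 ^ 2 = 3`. The initial profile is the identity
`1 - tanh z = 2 e⁻ᶻ / (eᶻ + e⁻ᶻ)`.
-/

noncomputable def v : ℝ × ℝ → ℝ := fun p =>
  3/2 - (3/2) * Real.tanh (((3 * Real.sqrt 3 - 3)/4) * (p.1 + ((5 - Real.sqrt 3)/2) * p.2))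

theorem hasDerivAt_tanh_riccati (z : ℝ) : HasDerivAt Real.tanh (1 - Real.tanh z ^ 2) z := by
  have hc : Real.cosh z ≠ 0 := (Real.cosh_pos z).ne'
  have h := (Real.hasDerivAt_sinh z).div (Real.hasDerivAt_cosh z) hc
  have e : Real.tanh = Real.sinh / Real.cosh := by
    funext y
    exact Real.tanh_eq_sinh_div_cosh y
  have hval : (Real.cosh z * Real.cosh z - Real.sinh z * Real.sinh z) / Real.cosh z ^ 2
      = 1 - Real.tanh z ^ 2 := by
    rw [Real.tanh_eq_sinh_div_cosh]
    field_simp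
  rwa [← e, hval] at h

theorem burgers_huxley_caseIII :
    (∀ x t : ℝ,
      deriv (fun s => v (x, s)) t =
        deriv (deriv (fun y => v (y, t))) x +
          2 * v (x, t) * deriv (fun y => v (y, t)) x +
          v (x, t) * (1 - v (x, t)) * (v (x, t) - 3)) ∧
    (∀ x : ℝ, v (x, 0) =
      3 * Real.exp (-(3 * (Real.sqrt 3 - 1)/4) * x) /
        (Real.exp ((3 * (Real.sqrt 3 - 1)/4) * x) + Real.exp (-(3 * (Real.sqrt 3 - 1)/4) * x))) := by
  have h3 : Real.sqrt 3 ^ 2 = 3 := Real.sq_sqrt (by norm_num)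
  constructor
  · intro x t
    simp only [v]
    obtain ⟨k, hk⟩ : ∃ k, k = (3 * Real.sqrt 3 - 3) / 4 := ⟨_, rfl⟩
    obtain ⟨c, hc⟩ : ∃ c, c = (5 - Real.sqrt 3) / 2 := ⟨_, rfl⟩
    rw [← hk, ← hc]
    have hquad : 8 * k ^ 2 + 12 * k - 9 = 0 := by
      rw [hk]; linear_combination (9 / 2) * h3
    have hspeed : 12 * k * c = 36 * k - 9 := by
      rw [hk, hc]; linear_combination (-9 / 2) * h3
    have hTx (y : ℝ) : HasDerivAt (fun y => Real.tanh (k * (y + c * t)))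
        ((1 - Real.tanh (k * (y + c * t)) ^ 2) * k) y := by
      have hin : HasDerivAt (fun y => k * (y + c * t)) k y := by
        simpa using ((hasDerivAt_id y).add_const (c * t)).const_mul k
      exact (hasDerivAt_tanh_riccati _).comp y hin
    have hTt : HasDerivAt (fun s => Real.tanh (k * (x + c * s)))
        ((1 - Real.tanh (k * (x + c * t)) ^ 2) * (k * c)) t := by
      have hin : HasDerivAt (fun s => k * (x + c * s)) (k * c) t := by
        simpa using (((hasDerivAt_id t).const_mul c).const_add x).const_mul k
      exact (hasDerivAt_tanh_riccati _).comp t hin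
    have hvx : deriv (fun y => 3 / 2 - 3 / 2 * Real.tanh (k * (y + c * t))) =
        fun y => -(3 / 2 * ((1 - Real.tanh (k * (y + c * t)) ^ 2) * k)) :=
      funext fun y => (((hTx y).const_mul (3 / 2)).const_sub (3 / 2)).deriv
    have hvxx : deriv (fun y => -(3 / 2 * ((1 - Real.tanh (k * (y + c * t)) ^ 2) * k))) x = _ :=
      ((((((hTx x).pow 2).const_sub 1).mul_const k).const_mul (3 / 2)).neg).deriv
    have hvt := ((hTt.const_mul (3 / 2)).const_sub (3 / 2)).deriv
    rw [hvt, hvx, hvxx]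
    beta_reduce
    generalize Real.tanh (k * (x + c * t)) = T
    push_cast
    linear_combination (1 - T ^ 2) * (-(1 / 8) * hspeed - (3 / 8) * T * hquad)
  · intro x
    have hz : (3 * Real.sqrt 3 - 3) / 4 * (x + (5 - Real.sqrt 3) / 2 * 0)
        = 3 * (Real.sqrt 3 - 1) / 4 * x := by ring
    simp only [v]
    rw [hz, neg_mul, Real.tanh_eq_sinh_div_cosh, Real.sinh_eq, Real.cosh_eq]
    generalize 3 * (Real.sqrt 3 - 1) / 4 * x = z
    have hpos : Real.exp z + Real.exp (-z) ≠ 0 := by positivity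
    field_simp
    ring
end

section
/- Let b = 3·(√3 − 1)/4 and v₀ : ℝ → ℝ be v₀(x) = 3·exp(−b·x)/(exp(b·x) + exp(−b·x)). Then the function v₁(x,t) = −(9/2)·(3·√3 − 4)·t/(exp(b·x) + exp(−b·x))² satisfies v₁(x,0) = 0 for all x, and for all real x, t: ∂v₁/∂t(x,t) = v₀''(x) + 2·v₀(x)·v₀'(x) + v₀(x)·(1 − v₀(x))·(v₀(x) − 3). -/
/-!
Put `p = exp (b x)`, `q = exp (-b x)`, `S = p + q`, so that `p q = 1`, and `y = q / S`.
Then `v₀ = 3 y`, `1 / S ^ 2 = y (1 - y)`, `v₀' = -6 b / S ^ 2` and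
`v₀'' = 12 b ^ 2 (1 - 2 y) / S ^ 2`. The right-hand side of the recursion is therefore
`(12 b ^ 2 - 9 - (24 b ^ 2 + 36 b - 27) y) / S ^ 2`. Since `b` is a root of
`8 b ^ 2 + 12 b - 9`, the coefficient of `y` vanishes, and the constant term
`12 b ^ 2 - 9` equals `-(9/2) (3 √3 - 4)`.
-/

noncomputable def b : ℝ := 3 * (Real.sqrt 3 - 1) / 4

noncomputable def v₀ : ℝ → ℝ := fun x =>
  3 * Real.exp (-b * x) / (Real.exp (b * x) + Real.exp (-b * x))

noncomputable def v₁ : ℝ → ℝ → ℝ := fun x t =>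
  -(9/2) * (3 * Real.sqrt 3 - 4) * t / (Real.exp (b * x) + Real.exp (-b * x))^2

lemma b_quadratic : 8 * b ^ 2 + 12 * b - 9 = 0 := by
  have h : Real.sqrt 3 ^ 2 = 3 := Real.sq_sqrt (by norm_num)
  unfold b
  linear_combination (9 / 2) * h

lemma b_sq_const : -(9/2) * (3 * Real.sqrt 3 - 4) = 12 * b ^ 2 - 9 := by
  have h : Real.sqrt 3 ^ 2 = 3 := Real.sq_sqrt (by norm_num)
  unfold b
  linear_combination (-27 / 4) * h

lemma exp_mul_exp_neg_b (x : ℝ) : Real.exp (b * x) * Real.exp (-b * x) = 1 := by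
  rw [← Real.exp_add]
  simp

lemma hasDerivAt_exp_const_mul (c x : ℝ) :
    HasDerivAt (fun x => Real.exp (c * x)) (c * Real.exp (c * x)) x := by
  simpa [mul_comm] using ((hasDerivAt_id x).const_mul c).exp

lemma hasDerivAt_exp_sum (x : ℝ) :
    HasDerivAt (fun x => Real.exp (b * x) + Real.exp (-b * x))
      (b * Real.exp (b * x) + -b * Real.exp (-b * x)) x :=
  (hasDerivAt_exp_const_mul b x).add (hasDerivAt_exp_const_mul (-b) x)

lemma deriv_v₀ : deriv v₀ = fun x =>
    -6 * b / (Real.exp (b * x) + Real.exp (-b * x)) ^ 2 := by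
  funext x
  have hS : Real.exp (b * x) + Real.exp (-b * x) ≠ 0 := by positivity
  have h : HasDerivAt v₀ _ x :=
    ((hasDerivAt_exp_const_mul (-b) x).const_mul 3).div (hasDerivAt_exp_sum x) hS
  rw [h.deriv]
  congr 1
  linear_combination (-6 * b) * exp_mul_exp_neg_b x

lemma deriv_deriv_v₀ (x : ℝ) : deriv (deriv v₀) x =
    12 * b ^ 2 * (Real.exp (b * x) - Real.exp (-b * x)) /
      (Real.exp (b * x) + Real.exp (-b * x)) ^ 3 := by
  have hS : Real.exp (b * x) + Real.exp (-b * x) ≠ 0 := by positivity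
  rw [deriv_v₀]
  have h := (hasDerivAt_const x (-6 * b)).fun_div ((hasDerivAt_exp_sum x).fun_pow 2)
    (pow_ne_zero 2 hS)
  rw [h.deriv]
  field_simp
  ring

theorem hpm_caseIII_order1 :
    (∀ x : ℝ, v₁ x 0 = 0) ∧
    (∀ x t : ℝ,
      deriv (fun s => v₁ x s) t =
        deriv (deriv v₀) x + 2 * v₀ x * deriv v₀ x +
          v₀ x * (1 - v₀ x) * (v₀ x - 3)) := by
  refine ⟨fun x => by simp [v₁], fun x t => ?_⟩
  have h₁ : deriv (fun s => v₁ x s) t =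
      (12 * b ^ 2 - 9) / (Real.exp (b * x) + Real.exp (-b * x)) ^ 2 := by
    rw [← b_sq_const]
    simp [v₁]
  rw [h₁, deriv_deriv_v₀, deriv_v₀]
  simp only [v₀]
  have hS : Real.exp (b * x) + Real.exp (-b * x) ≠ 0 := by positivity
  have hpq := exp_mul_exp_neg_b x
  have hb := b_quadratic
  generalize Real.exp (b * x) = p at *
  generalize Real.exp (-b * x) = q at *
  -- The reaction term is `-9 p q (p - 2 q) / S ^ 3`, and `p q = 1`.
  have hR : 3 * q / (p + q) * (1 - 3 * q / (p + q)) * (3 * q / (p + q) - 3) =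
      -9 * (p - 2 * q) / (p + q) ^ 3 := by
    field_simp
    linear_combination (-9 * (p - 2 * q)) * hpq
  rw [hR]
  field_simp
  linear_combination (3 * q) * hb
end
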